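/- arXiv:2507.12078 — 3 statements merged into one kernel-verified Lean document; each statement's English description precedes it below -/
import Mathlib

section
/- For all distinct natural numbers i and j: if E i j does not hold then u i \ u j = u i, and if E i j holds then u i \ u j = u i \ {(min i j, max i j)}. -/
/-- The index set `I = {(n,m) : ℕ × ℕ | n ≤ m}`. -/
def I : Set (ℕ × ℕ) := {p | p.1 ≤ p.2}

/-- The element `u n = {(n,m) | n ≤ m} ∪ {(m,n) | m < n ∧ E m n}` of the Boolean algebra `Set I`. -/
def u (E : ℕ → ℕ → Prop) (n : ℕ) : Set I :=
  {p : I | (p.val.1 = n ∧ n ≤ p.val.2) ∨ (p.val.2 = n ∧ p.val.1 < n ∧ E p.val.1 n)}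

/-- The unordered pair `{i, j}` encoded as an element of `I`; for `i ≠ j` it is the only index
that `u E i` and `u E j` can share. -/
def sortedPair (i j : ℕ) : I := ⟨(min i j, max i j), show min i j ≤ max i j from min_le_max⟩

theorem sortedPair_comm (i j : ℕ) : sortedPair i j = sortedPair j i := by
  simp only [sortedPair, min_comm i j, max_comm i j]

theorem rel_min_max_iff {α : Type*} [LinearOrder α] {r : α → α → Prop}
    (hr : ∀ a b, r a b → r b a) (a b : α) : r (min a b) (max a b) ↔ r a b := by
  rcases le_total a b with hab | hba
  · rw [min_eq_left hab, max_eq_right hab]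
  · rw [min_eq_right hba, max_eq_left hba]
    exact ⟨hr b a, hr a b⟩

section

variable {E : ℕ → ℕ → Prop} {i j : ℕ} {p : I}

theorem mem_u_iff : p ∈ u E i ↔ p.val.1 = i ∨ p.val.2 = i ∧ E p.val.1 i := by
  have hp : p.val.1 ≤ p.val.2 := p.property
  simp only [u, Set.mem_ofPred_eq]
  constructor
  · rintro (⟨hfst, -⟩ | ⟨hsnd, -, hE⟩)
    · exact .inl hfst
    · exact .inr ⟨hsnd, hE⟩
  · rintro (hfst | ⟨hsnd, hE⟩)
    · exact .inl ⟨hfst, hfst ▸ hp⟩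
    · rcases (hsnd ▸ hp : p.val.1 ≤ i).eq_or_lt with heq | hlt
      · exact .inl ⟨heq, hsnd.ge⟩
      · exact .inr ⟨hsnd, hlt, hE⟩

theorem mem_u_inter_u_iff_of_lt (hij : i < j) :
    p ∈ u E i ∩ u E j ↔ p = sortedPair i j ∧ E i j := by
  have hp : p.val.1 ≤ p.val.2 := p.property
  have eq_sortedPair_iff : p = sortedPair i j ↔ p.val.1 = i ∧ p.val.2 = j := by
    simp only [sortedPair, min_eq_left hij.le, max_eq_right hij.le, Subtype.ext_iff, Prod.ext_iff]
  rw [Set.mem_inter_iff, mem_u_iff, mem_u_iff, eq_sortedPair_iff]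
  constructor
  · rintro ⟨hfst | ⟨hsnd, -⟩, hfst' | ⟨hsnd', hE⟩⟩
    · omega
    · exact ⟨⟨hfst, hsnd'⟩, hfst ▸ hE⟩
    · omega
    · omega
  · rintro ⟨⟨hfst, hsnd⟩, hE⟩
    exact ⟨.inl hfst, .inr ⟨hsnd, hfst.symm ▸ hE⟩⟩

theorem mem_u_inter_u_iff (hij : i ≠ j) :
    p ∈ u E i ∩ u E j ↔ p = sortedPair i j ∧ E (min i j) (max i j) := by
  rcases hij.lt_or_gt with hlt | hgt
  · rw [min_eq_left hlt.le, max_eq_right hlt.le, mem_u_inter_u_iff_of_lt hlt]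
  · rw [min_eq_right hgt.le, max_eq_left hgt.le, Set.inter_comm, sortedPair_comm,
      mem_u_inter_u_iff_of_lt hgt]

theorem disjoint_u_of_not_rel (hij : i ≠ j) (hE : ¬ E (min i j) (max i j)) :
    Disjoint (u E i) (u E j) :=
  Set.disjoint_iff.2 fun _ hp => hE ((mem_u_inter_u_iff hij).1 hp).2

theorem u_inter_u_eq_singleton_of_rel (hij : i ≠ j) (hE : E (min i j) (max i j)) :
    u E i ∩ u E j = {sortedPair i j} :=
  Set.ext fun _ => (mem_u_inter_u_iff hij).trans (and_iff_left hE)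

end

theorem relative_complement_general (E : ℕ → ℕ → Prop) {i j : ℕ} (hij : i ≠ j) :
    (¬ E (min i j) (max i j) → u E i \ u E j = u E i) ∧
    (E (min i j) (max i j) → u E i \ u E j = u E i \ {sortedPair i j}) := by
  refine ⟨fun hE => (disjoint_u_of_not_rel hij hE).sdiff_eq_left, fun hE => ?_⟩
  rw [← u_inter_u_eq_singleton_of_rel hij hE, Set.sdiff_self_inter]

/-- For distinct `i, j`: if `¬ E i j` then `u i \ u j = u i`, and if `E i j` then
`u i \ u j = u i \ {(min i j, max i j)}`. -/
theorem relative_complement (E : ℕ → ℕ → Prop)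
    (hsym : ∀ a b, E a b → E b a) (hirr : ∀ a, ¬ E a a)
    (i j : ℕ) (hij : i ≠ j) :
    (¬ E i j → u E i \ u E j = u E i) ∧
    (E i j → u E i \ u E j = u E i \ {⟨(min i j, max i j), by exact (min_le_max : min i j ≤ max i j)⟩}) := by
  rw [← rel_min_max_iff hsym i j]
  exact relative_complement_general E hij
end

section
/- Let i_1, …, i_k be pairwise distinct natural numbers and let B be the Boolean subalgebra of Set I generated by {u i_1, …, u i_k}. Then for every n with 1 ≤ n ≤ k, the set u i_n \ (⋃ of u i_ℓ over all ℓ ≠ n, 1 ≤ ℓ ≤ k) is an atom of B. -/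
/-- A Boolean subalgebra of a Boolean algebra, i.e. a subset containing `⊥` and `⊤` and
closed under `⊓`, `⊔`, and complement. -/
def IsBoolSubalg {L : Type*} [BooleanAlgebra L] (B : Set L) : Prop :=
  ⊥ ∈ B ∧ ⊤ ∈ B ∧ (∀ x ∈ B, ∀ y ∈ B, x ⊓ y ∈ B) ∧ (∀ x ∈ B, ∀ y ∈ B, x ⊔ y ∈ B) ∧
    ∀ x ∈ B, xᶜ ∈ B

/-- The Boolean subalgebra generated by a set: the smallest Boolean subalgebra containing it. -/
def boolGen {L : Type*} [BooleanAlgebra L] (S : Set L) : Set L :=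
  ⋂₀ {B | IsBoolSubalg B ∧ S ⊆ B}

/-- `a` is an atom of the Boolean subalgebra `B`. -/
def IsAtomOfSet {L : Type*} [BooleanAlgebra L] (B : Set L) (a : L) : Prop :=
  a ∈ B ∧ a ≠ ⊥ ∧ ∀ b ∈ B, b ≤ a → b = ⊥ ∨ b = a

/-! Every generator either equals `u (i n)` or lies below the union of the others, so it either
contains the difference `u (i n) \ ⋃ ℓ ≠ n, u (i ℓ)` or is disjoint from it. The sets with this
dichotomy form a Boolean subalgebra, so no member of the generated subalgebra splits the difference.
It is nonempty because the diagonal point `(i n, i n)` lies in no other generator. -/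

section BooleanAlgebra

variable {L : Type*} [BooleanAlgebra L] {S : Set L} {a x c : L}

theorem isBoolSubalg_coe (K : BooleanSubalgebra L) : IsBoolSubalg (K : Set L) :=
  ⟨K.bot_mem, K.top_mem, fun _ hx _ hy ↦ K.inf_mem hx hy, fun _ hx _ hy ↦ K.sup_mem hx hy,
    fun _ hx ↦ K.compl_mem hx⟩

/-- A set satisfying the predicate `IsBoolSubalg`, bundled as a `BooleanSubalgebra`; this makes the
closure operator `BooleanSubalgebra.closure` available for `boolGen`. -/
def IsBoolSubalg.toBooleanSubalgebra {B : Set L} (hB : IsBoolSubalg B) : BooleanSubalgebra L where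
  carrier := B
  bot_mem' := hB.1
  infClosed' x hx y hy := hB.2.2.1 x hx y hy
  supClosed' x hx y hy := hB.2.2.2.1 x hx y hy
  compl_mem' {x} hx := hB.2.2.2.2 x hx

theorem boolGen_eq_closure (S : Set L) : boolGen S = BooleanSubalgebra.closure S := by
  apply Set.Subset.antisymm
  · exact Set.sInter_subset_of_mem ⟨isBoolSubalg_coe _, BooleanSubalgebra.subset_closure⟩
  · rintro x hx B ⟨hB, hSB⟩
    exact BooleanSubalgebra.mem_closure.1 hx (L := hB.toBooleanSubalgebra) hSB

/-- The Boolean subalgebra of the elements that do not split `a`: those containing `a` or disjoint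
from it. Since they form a subalgebra, atomicity of `a` need only be tested on generators. -/
def nonsplitting (a : L) : BooleanSubalgebra L where
  carrier := {b | a ≤ b ∨ Disjoint a b}
  bot_mem' := Or.inr disjoint_bot_right
  infClosed' := by
    rintro x (hx | hx) y (hy | hy)
    · exact Or.inl (le_inf hx hy)
    · exact Or.inr (hy.mono_right inf_le_right)
    all_goals exact Or.inr (hx.mono_right inf_le_left)
  supClosed' := by
    rintro x (hx | hx) y (hy | hy)
    · exact Or.inl (le_sup_of_le_left hx)
    · exact Or.inl (le_sup_of_le_left hx)
    · exact Or.inl (le_sup_of_le_right hy)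
    · exact Or.inr (hx.sup_right hy)
  compl_mem' := by
    rintro x (hx | hx)
    · exact Or.inr (disjoint_compl_right_iff.2 hx)
    · exact Or.inl (le_compl_iff_disjoint_right.2 hx)

theorem isAtomOfSet_of_subset_nonsplitting {B : Set L} (ha : a ∈ B) (ha_ne : a ≠ ⊥)
    (hB : B ⊆ nonsplitting a) : IsAtomOfSet B a := by
  refine ⟨ha, ha_ne, fun b hb hba ↦ ?_⟩
  rcases hB hb with hab | hab
  · exact Or.inr (hba.antisymm hab)
  · exact Or.inl (hab.symm.eq_bot_of_le hba)

theorem isAtomOfSet_boolGen_sdiff (hx : x ∈ boolGen S) (hc : c ∈ boolGen S) (hxc : ¬x ≤ c)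
    (hS : ∀ s ∈ S, s = x ∨ s ≤ c) : IsAtomOfSet (boolGen S) (x \ c) := by
  rw [boolGen_eq_closure] at hx hc ⊢
  have generators_nonsplitting : S ⊆ nonsplitting (x \ c) := by
    intro s hs
    rcases hS s hs with rfl | hsc
    · exact Or.inl sdiff_le
    · exact Or.inr (disjoint_sdiff_self_left.mono_right hsc)
  exact isAtomOfSet_of_subset_nonsplitting (BooleanSubalgebra.sdiff_mem hx hc)
    (mt sdiff_eq_bot_iff.1 hxc) (BooleanSubalgebra.closure_le.2 generators_nonsplitting)

end BooleanAlgebra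

theorem diagonal_mem_u_iff {E : ℕ → ℕ → Prop} {a n : ℕ} :
    (⟨(a, a), le_refl a⟩ : I) ∈ u E n ↔ a = n := by
  constructor
  · rintro (⟨h, -⟩ | ⟨h, -⟩) <;> exact h
  · rintro rfl
    exact Or.inl ⟨rfl, le_rfl⟩

theorem not_u_subset_iUnion_u {ι : Type*} (E : ℕ → ℕ → Prop) {i : ι → ℕ}
    (hi : Function.Injective i) (n : ι) : ¬u E (i n) ⊆ ⋃ ℓ, ⋃ (_ : ℓ ≠ n), u E (i ℓ) := by
  intro h
  obtain ⟨ℓ, hℓ, hmem⟩ := Set.mem_iUnion₂.1 (h (diagonal_mem_u_iff.2 rfl))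
  exact hℓ (hi (diagonal_mem_u_iff.1 hmem)).symm

theorem generator_minus_others_is_atom_general {ι : Type*} [Finite ι] (E : ℕ → ℕ → Prop)
    {i : ι → ℕ} (hi : Function.Injective i) (n : ι) :
    IsAtomOfSet (boolGen (Set.range fun ℓ ↦ u E (i ℓ)))
      (u E (i n) \ ⋃ ℓ, ⋃ (_ : ℓ ≠ n), u E (i ℓ)) := by
  have u_mem (ℓ : ι) : u E (i ℓ) ∈ BooleanSubalgebra.closure (Set.range fun ℓ ↦ u E (i ℓ)) :=
    BooleanSubalgebra.subset_closure (Set.mem_range_self ℓ)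
  apply isAtomOfSet_boolGen_sdiff
  · rw [boolGen_eq_closure]
    exact u_mem n
  · rw [boolGen_eq_closure]
    exact BooleanSubalgebra.iSup_mem fun ℓ ↦ BooleanSubalgebra.iSup_mem fun _ ↦ u_mem ℓ
  · exact not_u_subset_iUnion_u E hi n
  · rintro _ ⟨ℓ, rfl⟩
    rcases eq_or_ne ℓ n with rfl | hℓ
    · exact Or.inl rfl
    · exact Or.inr (Set.subset_iUnion₂_of_subset ℓ hℓ Set.Subset.rfl)

/-- For pairwise distinct `i 1, …, i k` and each position `n`, the set
`u (i n) \ (⋃ ℓ ≠ n, u (i ℓ))` is an atom of the Boolean subalgebra of `Set I` generated by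
`{u (i 1), …, u (i k)}`. -/
theorem generator_minus_others_is_atom (E : ℕ → ℕ → Prop)
    (hsym : ∀ a b, E a b → E b a) (hirr : ∀ a, ¬ E a a)
    (k : ℕ) (i : Fin k → ℕ) (hi : Function.Injective i) (n : Fin k) :
    IsAtomOfSet (boolGen (Set.range fun ℓ => u E (i ℓ)))
      (u E (i n) \ ⋃ ℓ, ⋃ (_ : ℓ ≠ n), u E (i ℓ)) :=
  generator_minus_others_is_atom_general E hi n
end

section
/- Let i_1, …, i_k be pairwise distinct natural numbers and let B be the Boolean subalgebra of Set I generated by {u i_1, …, u i_k}. Then every atom of B is of exactly one of the following forms, and all of the listed elements are pairwise distinct: (i) I \ (u i_1 ∪ ⋯ ∪ u i_k); (ii) u i_n \ (⋃ of u i_ℓ over ℓ ≠ n) for some 1 ≤ n ≤ k; (iii) {(i_n, i_m)} for some n, m with i_n < i_m and E i_n i_m. -/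
/-!
An atom of the subalgebra of `Set X` generated by a family of sets, finite or not, consists of the
points lying in the same generators as any one of its points `p`. For `a < b` the sets `u E a` and
`u E b` meet at most in `(a, b)`, so the atom is determined by whether `p` lies in none of the
generators, in exactly one, or in two of them. The diagonal point `(a, a)` lies in `u E a` and in no
other `u E b`, which tells the second kind of set apart from the others and from each other.
-/

section BooleanAlgebra

variable {L : Type*} [BooleanAlgebra L] {B S : Set L} {a x : L}

theorem subset_boolGen : S ⊆ boolGen S :=
  Set.subset_sInter fun _ hB ↦ hB.2

theorem boolGen_subset (hB : IsBoolSubalg B) (hSB : S ⊆ B) : boolGen S ⊆ B :=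
  Set.sInter_subset_of_mem ⟨hB, hSB⟩

theorem infClosed_boolGen : InfClosed (boolGen S) :=
  infClosed_sInter fun _ hB _ hx _ hy ↦ hB.1.2.2.1 _ hx _ hy

theorem IsAtomOfSet.le_or_disjoint (ha : IsAtomOfSet B a) (hB : InfClosed B) (hx : x ∈ B) :
    a ≤ x ∨ Disjoint a x := by
  obtain ⟨haB, -, hmin⟩ := ha
  rcases hmin (a ⊓ x) (hB haB hx) inf_le_left with hbot | hself
  · exact .inr (disjoint_iff.2 hbot)
  · exact .inl (inf_eq_left.1 hself)

end BooleanAlgebra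

section Cell

variable {X ι : Type*} {f : ι → Set X} {a b : Set X} {p q : X} {m n : ι}

theorem isBoolSubalg_mem_iff_mem (p q : X) : IsBoolSubalg {b : Set X | p ∈ b ↔ q ∈ b} :=
  ⟨Iff.rfl, Iff.rfl, fun _ hx _ hy ↦ and_congr hx hy, fun _ hx _ hy ↦ or_congr hx hy,
    fun _ hx ↦ not_congr hx⟩

/-- The cell of `p` in the Venn diagram of the family `f`: the points that lie in exactly the same
members of `f` as `p`. -/
def cell (f : ι → Set X) (p : X) : Set X :=
  {q | ∀ l, q ∈ f l ↔ p ∈ f l}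

theorem mem_iff_mem_of_mem_cell (hq : q ∈ cell f p) (hb : b ∈ boolGen (Set.range f)) :
    q ∈ b ↔ p ∈ b :=
  boolGen_subset (isBoolSubalg_mem_iff_mem q p) (Set.range_subset_iff.2 hq) hb

theorem IsAtomOfSet.eq_cell (ha : IsAtomOfSet (boolGen (Set.range f)) a) (hp : p ∈ a) :
    a = cell f p := by
  refine Set.Subset.antisymm (fun q hq l ↦ ?_) fun q hq ↦ (mem_iff_mem_of_mem_cell hq ha.1).2 hp
  rcases ha.le_or_disjoint infClosed_boolGen (subset_boolGen (Set.mem_range_self l)) with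
    hsub | hdisj
  · exact iff_of_true (hsub hq) (hsub hp)
  · exact iff_of_false (hdisj.notMem_of_mem_left hq) (hdisj.notMem_of_mem_left hp)

theorem cell_eq_compl_iUnion (hp : ∀ l, p ∉ f l) : cell f p = (⋃ l, f l)ᶜ := by
  ext q
  simp only [cell, hp, iff_false, Set.mem_ofPred_eq, Set.mem_compl_iff, Set.mem_iUnion, not_exists]

theorem cell_eq_sdiff_iUnion (hn : p ∈ f n) (hne : ∀ l, l ≠ n → p ∉ f l) :
    cell f p = f n \ ⋃ l, ⋃ (_ : l ≠ n), f l := by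
  ext q
  simp only [cell, Set.mem_ofPred_eq, Set.mem_sdiff, Set.mem_iUnion, not_exists]
  refine ⟨fun hq ↦ ⟨(hq n).2 hn, fun l hl ↦ (hq l).not.2 (hne l hl)⟩, fun ⟨hqn, hqne⟩ l ↦ ?_⟩
  obtain rfl | hl := eq_or_ne l n
  · exact iff_of_true hqn hn
  · exact iff_of_false (hqne l hl) (hne l hl)

theorem cell_eq_singleton (hmn : (f m ∩ f n).Subsingleton) (hm : p ∈ f m) (hn : p ∈ f n) :
    cell f p = {p} :=
  Set.Subset.antisymm (fun _ hq ↦ hmn ⟨(hq m).2 hm, (hq n).2 hn⟩ ⟨hm, hn⟩)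
    (Set.singleton_subset_iff.2 fun _ ↦ Iff.rfl)

end Cell

section Graph

variable {E : ℕ → ℕ → Prop} {a b : ℕ} {p : I}

theorem mk_mem_u_left (h : a ≤ b) : (⟨(a, b), h⟩ : I) ∈ u E a :=
  .inl ⟨rfl, h⟩

theorem diag_mem_u_iff : (⟨(a, a), le_refl a⟩ : I) ∈ u E b ↔ a = b := by
  refine ⟨?_, fun h ↦ h ▸ mk_mem_u_left le_rfl⟩
  rintro (⟨h, -⟩ | ⟨h, -⟩) <;> exact h

theorem mem_u_inter_u_iff_s8 (hab : a < b) :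
    p ∈ u E a ∩ u E b ↔ p = ⟨(a, b), hab.le⟩ ∧ E a b := by
  obtain ⟨⟨x, y⟩, hxy⟩ := p
  constructor
  · rintro ⟨⟨rfl, -⟩ | ⟨rfl, hlt, -⟩, ⟨rfl, -⟩ | ⟨rfl, -, hE⟩⟩
    · exact absurd hab (lt_irrefl _)
    · exact ⟨rfl, hE⟩
    · exact absurd (hlt.trans hab) (lt_irrefl _)
    · exact absurd hab (lt_irrefl _)
  · rintro ⟨⟨⟩, hE⟩
    exact ⟨mk_mem_u_left hab.le, .inr ⟨rfl, hab, hE⟩⟩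

theorem subsingleton_u_inter_u (hab : a < b) : (u E a ∩ u E b).Subsingleton :=
  fun _ hp _ hq ↦
    ((mem_u_inter_u_iff_s8 hab).1 hp).1.trans ((mem_u_inter_u_iff_s8 hab).1 hq).1.symm

variable {ι : Type*} {i : ι → ℕ}

theorem cell_u_eq_singleton {m n : ι} (h : i n < i m) (hn : p ∈ u E (i n)) (hm : p ∈ u E (i m)) :
    E (i n) (i m) ∧ cell (fun ℓ ↦ u E (i ℓ)) p = {⟨(i n, i m), h.le⟩} := by
  obtain ⟨rfl, hE⟩ := (mem_u_inter_u_iff_s8 h).1 ⟨hn, hm⟩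
  exact ⟨hE, cell_eq_singleton (subsingleton_u_inter_u h) hn hm⟩

theorem diag_mem_u_sdiff_iUnion (hi : Function.Injective i) (n : ι) :
    (⟨(i n, i n), le_refl (i n)⟩ : I) ∈ u E (i n) \ ⋃ ℓ, ⋃ (_ : ℓ ≠ n), u E (i ℓ) := by
  simp only [Set.mem_sdiff, Set.mem_iUnion, diag_mem_u_iff, not_exists, true_and]
  exact fun ℓ hℓ h ↦ hℓ (hi h.symm)

theorem IsAtomOfSet.eq_compl_or_eq_sdiff_or_eq_singleton (hi : Function.Injective i) {A : Set I}
    (hA : IsAtomOfSet (boolGen (Set.range fun ℓ ↦ u E (i ℓ))) A) :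
    A = (⋃ ℓ, u E (i ℓ))ᶜ ∨
    (∃ n, A = u E (i n) \ ⋃ ℓ, ⋃ (_ : ℓ ≠ n), u E (i ℓ)) ∨
    (∃ n m, ∃ h : i n < i m, E (i n) (i m) ∧ A = {⟨(i n, i m), h.le⟩}) := by
  obtain ⟨p, hp⟩ := Set.nonempty_iff_ne_empty.2 hA.2.1
  rw [hA.eq_cell hp]
  by_cases hnone : ∀ ℓ, p ∉ u E (i ℓ)
  · exact .inl (cell_eq_compl_iUnion hnone)
  obtain ⟨n, hn⟩ := not_forall_not.1 hnone
  by_cases hunique : ∀ ℓ, ℓ ≠ n → p ∉ u E (i ℓ)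
  · exact .inr (.inl ⟨n, cell_eq_sdiff_iUnion hn hunique⟩)
  push Not at hunique
  obtain ⟨m, hmn, hm⟩ := hunique
  rcases lt_or_gt_of_ne (hi.ne hmn) with hlt | hlt
  · exact .inr (.inr ⟨m, n, hlt, cell_u_eq_singleton hlt hm hn⟩)
  · exact .inr (.inr ⟨n, m, hlt, cell_u_eq_singleton hlt hn hm⟩)

theorem compl_iUnion_u_ne_sdiff (hi : Function.Injective i) (n : ι) :
    (⋃ ℓ, u E (i ℓ))ᶜ ≠ u E (i n) \ ⋃ ℓ, ⋃ (_ : ℓ ≠ n), u E (i ℓ) := by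
  intro h
  have hdiag := diag_mem_u_sdiff_iUnion (E := E) hi n
  exact h.symm.subset hdiag (Set.mem_iUnion_of_mem n hdiag.1)

theorem compl_iUnion_u_ne_singleton {n : ι} (h : i n ≤ b) :
    (⋃ ℓ, u E (i ℓ))ᶜ ≠ {⟨(i n, b), h⟩} := by
  intro heq
  have hmem : (⟨(i n, b), h⟩ : I) ∈ (⋃ ℓ, u E (i ℓ))ᶜ := heq.symm.subset (Set.mem_singleton _)
  exact hmem (Set.mem_iUnion_of_mem n (mk_mem_u_left h))

theorem u_sdiff_iUnion_ne_singleton (hi : Function.Injective i) (n : ι) (hab : a < b) :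
    u E (i n) \ (⋃ ℓ, ⋃ (_ : ℓ ≠ n), u E (i ℓ)) ≠ {⟨(a, b), hab.le⟩} := by
  intro h
  have hdiag : (⟨(i n, i n), le_refl (i n)⟩ : I) = ⟨(a, b), hab.le⟩ :=
    Set.mem_singleton_iff.1 (h.subset (diag_mem_u_sdiff_iUnion hi n))
  cases hdiag
  exact lt_irrefl _ hab

theorem u_sdiff_iUnion_injective (hi : Function.Injective i) :
    Function.Injective fun n ↦ u E (i n) \ ⋃ ℓ, ⋃ (_ : ℓ ≠ n), u E (i ℓ) := by
  intro n n' h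
  have hdiag : (⟨(i n, i n), le_refl (i n)⟩ : I) ∈ u E (i n') \ ⋃ ℓ, ⋃ (_ : ℓ ≠ n'), u E (i ℓ) :=
    Eq.subset h (diag_mem_u_sdiff_iUnion hi n)
  exact hi (diag_mem_u_iff.1 hdiag.1)

end Graph

theorem atoms_classification_general (E : ℕ → ℕ → Prop) {ι : Type*} (i : ι → ℕ)
    (hi : Function.Injective i) :
    (∀ a : Set I, IsAtomOfSet (boolGen (Set.range fun ℓ ↦ u E (i ℓ))) a →
        a = (⋃ ℓ, u E (i ℓ))ᶜ ∨
        (∃ n, a = u E (i n) \ ⋃ ℓ, ⋃ (_ : ℓ ≠ n), u E (i ℓ)) ∨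
        (∃ n m, ∃ h : i n < i m, E (i n) (i m) ∧ a = {⟨(i n, i m), h.le⟩})) ∧
    (∀ n, (⋃ ℓ, u E (i ℓ))ᶜ ≠ u E (i n) \ ⋃ ℓ, ⋃ (_ : ℓ ≠ n), u E (i ℓ)) ∧
    (∀ n m, ∀ h : i n < i m, (⋃ ℓ, u E (i ℓ))ᶜ ≠ {⟨(i n, i m), h.le⟩}) ∧
    (∀ n n' m', ∀ h : i n' < i m',
      u E (i n) \ (⋃ ℓ, ⋃ (_ : ℓ ≠ n), u E (i ℓ)) ≠ {⟨(i n', i m'), h.le⟩}) ∧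
    (∀ n n', u E (i n) \ (⋃ ℓ, ⋃ (_ : ℓ ≠ n), u E (i ℓ)) =
        u E (i n') \ (⋃ ℓ, ⋃ (_ : ℓ ≠ n'), u E (i ℓ)) → n = n') ∧
    (∀ n m n' m', ∀ h : i n < i m, ∀ h' : i n' < i m',
      ({⟨(i n, i m), h.le⟩} : Set I) = {⟨(i n', i m'), h'.le⟩} → n = n' ∧ m = m') := by
  refine ⟨fun _ ha ↦ ha.eq_compl_or_eq_sdiff_or_eq_singleton hi, compl_iUnion_u_ne_sdiff hi,
    fun _ _ h ↦ compl_iUnion_u_ne_singleton h.le,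
    fun n _ _ h ↦ u_sdiff_iUnion_ne_singleton hi n h,
    fun _ _ h ↦ u_sdiff_iUnion_injective hi h, fun n m n' m' h h' heq ↦ ?_⟩
  have hpair : (i n, i m) = (i n', i m') := congrArg Subtype.val (Set.singleton_injective heq)
  exact ⟨hi (Prod.ext_iff.1 hpair).1, hi (Prod.ext_iff.1 hpair).2⟩

/-- For pairwise distinct `i 1, …, i k`, every atom of the Boolean subalgebra of `Set I`
generated by `{u (i 1), …, u (i k)}` is of exactly one of the forms
(i) `I \ (u (i 1) ∪ ⋯ ∪ u (i k))`,
(ii) `u (i n) \ (⋃ ℓ ≠ n, u (i ℓ))`,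
(iii) `{(i n, i m)}` with `i n < i m` and `E (i n) (i m)`,
and all the listed elements are pairwise distinct. -/
theorem atoms_classification (E : ℕ → ℕ → Prop)
    (hsym : ∀ a b, E a b → E b a) (hirr : ∀ a, ¬ E a a)
    (k : ℕ) (i : Fin k → ℕ) (hi : Function.Injective i) :
    (∀ a : Set I, IsAtomOfSet (boolGen (Set.range fun ℓ => u E (i ℓ))) a →
        a = (⋃ ℓ, u E (i ℓ))ᶜ ∨
        (∃ n : Fin k, a = u E (i n) \ ⋃ ℓ, ⋃ (_ : ℓ ≠ n), u E (i ℓ)) ∨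
        (∃ n m : Fin k, ∃ h : i n < i m, E (i n) (i m) ∧
          a = ({⟨(i n, i m), by exact h.le⟩} : Set I))) ∧
    -- the element of form (i) differs from all elements of form (ii)
    (∀ n : Fin k,
      (⋃ ℓ, u E (i ℓ))ᶜ ≠ u E (i n) \ ⋃ ℓ, ⋃ (_ : ℓ ≠ n), u E (i ℓ)) ∧
    -- the element of form (i) differs from all elements of form (iii)
    (∀ n m : Fin k, ∀ h : i n < i m, E (i n) (i m) →
      (⋃ ℓ, u E (i ℓ))ᶜ ≠ ({⟨(i n, i m), by exact h.le⟩} : Set I)) ∧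
    -- elements of form (ii) differ from all elements of form (iii)
    (∀ n n' m' : Fin k, ∀ h : i n' < i m', E (i n') (i m') →
      u E (i n) \ (⋃ ℓ, ⋃ (_ : ℓ ≠ n), u E (i ℓ)) ≠ ({⟨(i n', i m'), by exact h.le⟩} : Set I)) ∧
    -- the elements of form (ii) are pairwise distinct
    (∀ n n' : Fin k,
      u E (i n) \ (⋃ ℓ, ⋃ (_ : ℓ ≠ n), u E (i ℓ)) =
        u E (i n') \ (⋃ ℓ, ⋃ (_ : ℓ ≠ n'), u E (i ℓ)) → n = n') ∧
    -- the elements of form (iii) are pairwise distinct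
    (∀ n m n' m' : Fin k, ∀ h : i n < i m, ∀ h' : i n' < i m', E (i n) (i m) → E (i n') (i m') →
      ({⟨(i n, i m), by exact h.le⟩} : Set I) = ({⟨(i n', i m'), by exact h'.le⟩} : Set I) →
      n = n' ∧ m = m') := by
  obtain ⟨hatom, hne₁₂, hne₁₃, hne₂₃, hinj₂, hinj₃⟩ := atoms_classification_general E i hi
  exact ⟨hatom, hne₁₂, fun n m h _ ↦ hne₁₃ n m h, fun n n' m' h _ ↦ hne₂₃ n n' m' h, hinj₂,
    fun n m n' m' h h' _ _ ↦ hinj₃ n m n' m' h h'⟩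
end
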